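/- arXiv:2509.05912 — 2 statements merged into one kernel-verified Lean document; each statement's English description precedes it below -/
import Mathlib

section
/- The map σ, defined on triples of ℝ-linear isometric bijections of 𝕆 by σ(A,B,C) = (B, A, κ∘C∘κ), sends triality triples to triality triples: if B(x·y) = (C x)·(A y) for all x, y ∈ 𝕆, then A(x·y) = ((κ∘C∘κ)(x))·(B y) for all x, y ∈ 𝕆. -/
noncomputable section

/-- The octonions as the Cayley–Dickson double of the quaternions. -/
abbrev Oct : Type := Quaternion ℝ × Quaternion ℝ

namespace Oct

/-- Cayley–Dickson multiplication: (a,b)·(c,d) = (ac − d̄b, da + bc̄). -/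
def mul (x y : Oct) : Oct :=
  (x.1 * y.1 - star y.2 * x.2, y.2 * x.1 + x.2 * star y.1)

/-- The unit 1 = (1,0). -/
def one : Oct := (1, 0)

/-- Octonionic conjugation κ(a,b) = (ā, −b). -/
def conj (x : Oct) : Oct := (star x.1, -x.2)

/-- The squared Euclidean norm ‖(a,b)‖² = ‖a‖² + ‖b‖². -/
def normSq (x : Oct) : ℝ := ‖x.1‖ ^ 2 + ‖x.2‖ ^ 2

/-- Left multiplication L(s) : y ↦ s·y. -/
def L (s : Oct) : Oct → Oct := fun y => mul s y

/-- A linear automorphism of 𝕆 is an isometry if it preserves the Euclidean norm. -/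
def IsIsometry (A : Oct ≃ₗ[ℝ] Oct) : Prop := ∀ x, normSq (A x) = normSq x

/-- A triality triple: ℝ-linear isometric bijections with B(x·y) = (Cx)·(Ay). -/
def IsTriality (A B C : Oct ≃ₗ[ℝ] Oct) : Prop :=
  IsIsometry A ∧ IsIsometry B ∧ IsIsometry C ∧
    ∀ x y : Oct, B (mul x y) = mul (C x) (A y)

/-- Octonionic conjugation κ as an ℝ-linear equivalence. -/
def kappa : Oct ≃ₗ[ℝ] Oct where
  toFun := conj
  invFun := conj
  left_inv := fun x => by simp [conj]
  right_inv := fun x => by simp [conj]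
  map_add' := fun x y => by simp [conj, Prod.ext_iff, star_add, neg_add, add_comm]
  map_smul' := fun r x => by simp [conj, Prod.ext_iff]

/-- D ↦ κ∘D∘κ. -/
def conjOp (D : Oct ≃ₗ[ℝ] Oct) : Oct ≃ₗ[ℝ] Oct := kappa.trans (D.trans kappa)

/-- Triples of ℝ-linear bijections of 𝕆. -/
abbrev Triple := (Oct ≃ₗ[ℝ] Oct) × (Oct ≃ₗ[ℝ] Oct) × (Oct ≃ₗ[ℝ] Oct)

/-- The triality map τ(A,B,C) = (κBκ, κCκ, A). -/
def tauMap (T : Triple) : Triple := (conjOp T.2.1, conjOp T.2.2, T.1)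

/-- The outer involution σ(A,B,C) = (B, A, κCκ). -/
def sigmaMap (T : Triple) : Triple := (T.2.1, T.1, conjOp T.2.2)

/-- The induced map on S⁷ × S⁷: t(x,y) = (ȳ, x·ȳ). -/
def tS (p : Oct × Oct) : Oct × Oct := (conj p.2, mul p.1 (conj p.2))

/-- The swap s(x,y) = (y,x). -/
def swap (p : Oct × Oct) : Oct × Oct := (p.2, p.1)

end Oct

open Oct

/-!
Since `x̄(xy) = ‖x‖² y`, left multiplication by a nonzero `x` is inverted by left multiplication by
`x̄ / ‖x‖²`. Substituting `(x̄, xy)` into `B(uv) = (Cu)(Av)` gives `‖x‖² By = (Cx̄)(A(xy))`, and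
multiplying on the left by the conjugate of `Cx̄`, which has the same norm as `x`, solves for
`A(xy)`.
-/

namespace Oct

protected theorem zero_mul (y : Oct) : mul 0 y = 0 := by
  simp [mul]

protected theorem mul_smul_comm (r : ℝ) (x y : Oct) : mul x (r • y) = r • mul x y := by
  simp [mul, smul_sub, smul_add]

theorem conj_zero : conj 0 = 0 := by
  simp [conj]

theorem normSq_conj (x : Oct) : normSq (conj x) = normSq x := by
  simp [normSq, conj]

theorem normSq_eq_zero {x : Oct} : normSq x = 0 ↔ x = 0 := by
  simp [normSq, add_eq_zero_iff_of_nonneg, Prod.ext_iff]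

theorem normSq_eq_add_quaternion_normSq (x : Oct) :
    normSq x = Quaternion.normSq x.1 + Quaternion.normSq x.2 := by
  simp only [normSq, sq, Quaternion.normSq_eq_norm_mul_self]

theorem conj_mul_mul (x y : Oct) : mul (conj x) (mul x y) = normSq x • y := by
  obtain ⟨a, b⟩ := x
  obtain ⟨c, d⟩ := y
  rw [normSq_eq_add_quaternion_normSq]
  ext1
  · calc star a * (a * c - star d * b) - star (d * a + b * star c) * -b
        = star a * a * c + c * (star b * b) := by
          simp only [star_add, star_mul, star_star]
          noncomm_ring
      _ = (Quaternion.normSq a + Quaternion.normSq b) • c := by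
          rw [Quaternion.star_mul_self, Quaternion.star_mul_self, Quaternion.coe_mul_eq_smul,
            Quaternion.mul_coe_eq_smul, add_smul]
  · calc (d * a + b * star c) * star a + -b * star (a * c - star d * b)
        = d * (a * star a) + b * star b * d := by
          simp only [star_sub, star_mul, star_star]
          noncomm_ring
      _ = (Quaternion.normSq a + Quaternion.normSq b) • d := by
          rw [Quaternion.self_mul_star, Quaternion.self_mul_star, Quaternion.coe_mul_eq_smul,
            Quaternion.mul_coe_eq_smul, add_smul]

theorem conjOp_apply (D : Oct ≃ₗ[ℝ] Oct) (x : Oct) : conjOp D x = conj (D (conj x)) :=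
  rfl

theorem IsIsometry.conjOp {D : Oct ≃ₗ[ℝ] Oct} (hD : IsIsometry D) : IsIsometry (conjOp D) :=
  fun x => by rw [conjOp_apply, normSq_conj, hD, normSq_conj]

end Oct

theorem sigma_preserves_triality_general (A B : Oct →ₗ[ℝ] Oct) (C : Oct → Oct)
    (hC : ∀ x, normSq (C x) = normSq x) (h : ∀ x y, B (mul x y) = mul (C x) (A y)) (x y : Oct) :
    A (mul x y) = mul (conj (C (conj x))) (B y) := by
  obtain rfl | hx := eq_or_ne x 0
  · have hC_zero : C 0 = 0 := normSq_eq_zero.mp (by rw [hC, normSq_eq_zero])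
    rw [Oct.zero_mul, map_zero, conj_zero, hC_zero, conj_zero, Oct.zero_mul]
  · have normSq_C_conj : normSq (C (conj x)) = normSq x := by rw [hC, normSq_conj]
    refine smul_right_injective Oct (normSq_eq_zero.not.mpr hx) ?_
    calc normSq x • A (mul x y)
        = mul (conj (C (conj x))) (mul (C (conj x)) (A (mul x y))) := by
          rw [conj_mul_mul, normSq_C_conj]
      _ = mul (conj (C (conj x))) (B (mul (conj x) (mul x y))) := by rw [h]
      _ = normSq x • mul (conj (C (conj x))) (B y) := by
          rw [conj_mul_mul, map_smul, Oct.mul_smul_comm]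

/-- the map σ(A,B,C) = (B, A, κCκ) sends triality triples to triality
triples: if B(x·y) = (Cx)·(Ay) for all x,y, then A(x·y) = ((κCκ)x)·(By) for all x,y. -/
theorem sigma_preserves_triality (A B C : Oct ≃ₗ[ℝ] Oct)
    (h : IsTriality A B C) :
    IsTriality (sigmaMap (A, B, C)).1 (sigmaMap (A, B, C)).2.1 (sigmaMap (A, B, C)).2.2 := by
  obtain ⟨hA, hB, hC, hABC⟩ := h
  exact ⟨hB, hA, hC.conjOp, sigma_preserves_triality_general A B C hC hABC⟩
end
end

section
/- A triality triple (A,B,C) is fixed by the triality map τ (i.e., κ∘B∘κ = A, κ∘C∘κ = B, and A = C) if and only if A = B = C, which in turn holds if and only if A is an algebra automorphism of 𝕆, i.e., A(x·y) = A(x)·A(y) for all x, y ∈ 𝕆 (and B = C = A). -/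
noncomputable section

open Oct

/-!
If `(A, B, C)` is fixed by `τ`, then `C = A` and `B = κAκ`. Putting `x = 1` and then `y = 1` in
`B (x · y) = A x · A y` gives `B z = A 1 · A z = A z · A 1`, so `A 1` is central, hence a real
scalar `r`, and `B = r • A`. Since `κ` fixes real scalars, `B 1 = κ (A 1) = A 1`, which forces
`r = 1` and `B = A`.

Conversely, an automorphism `A` preserves real parts because every octonion satisfies
`x² = 2 Re(x) x - ‖x‖²`, and the coefficient of `x` is determined unless `x` is real. As
`x̄ = 2 Re(x) - x`, it follows that `A` commutes with `κ`, so `τ` fixes `(A, A, A)`.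
-/

namespace Oct

/-- The real part of an octonion, that is, its coordinate along the unit. -/
def re (x : Oct) : ℝ := x.1.re

section Algebra

protected theorem one_mul (x : Oct) : mul one x = x := by
  simp [mul, one]

protected theorem mul_one (x : Oct) : mul x one = x := by
  simp [mul, one]

protected theorem one_ne_zero : one ≠ 0 := by
  simp [one]

theorem smul_one_mul (r : ℝ) (x : Oct) : mul (r • one) x = r • x := by
  simp [mul, one, Prod.ext_iff]

theorem re_smul_one (r : ℝ) : re (r • one) = r :=
  mul_one r

theorem conj_one : conj one = one := by
  simp [conj, one]

theorem conj_smul (r : ℝ) (x : Oct) : conj (r • x) = r • conj x :=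
  map_smul kappa r x

theorem conj_conj (x : Oct) : conj (conj x) = x :=
  kappa.left_inv x

theorem conj_eq_two_re_smul_one_sub (x : Oct) : conj x = (2 * re x) • one - x := by
  ext : 1
  · simp [conj, one, re, Quaternion.star_eq_two_re_sub, ← Quaternion.coe_mul_eq_smul]
  · simp [conj, one]

theorem mul_self_eq_two_re_smul_sub_normSq_smul_one (x : Oct) :
    mul x x = (2 * re x) • x - normSq x • one := by
  obtain ⟨a, b⟩ := x
  ext : 1
  · have hnorm (q : Quaternion ℝ) : star q * q = ‖q‖ ^ 2 • (1 : Quaternion ℝ) := by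
      rw [Quaternion.star_mul_self, Quaternion.normSq_eq_norm_mul_self, ← sq,
        ← Quaternion.coe_mul_eq_smul, mul_one]
    have hsq : a * a = (2 * a.re) • a - star a * a := by
      rw [Quaternion.star_eq_two_re_sub, sub_mul, Quaternion.coe_mul_eq_smul, sub_sub_cancel]
    calc
      a * a - star b * b = (2 * a.re) • a - (star a * a + star b * b) := by rw [hsq, sub_sub]
      _ = (2 * a.re) • a - normSq (a, b) • 1 := by rw [hnorm, hnorm, ← add_smul, normSq]
  · calc
      b * a + b * star a = b * (2 * a.re : ℝ) := by rw [← mul_add, Quaternion.self_add_star']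
      _ = (2 * a.re) • b - normSq (a, b) • 0 := by
        rw [Quaternion.mul_coe_eq_smul, smul_zero, sub_zero]

theorem eq_re_smul_one_of_forall_mul_comm {u : Oct} (hu : ∀ x, mul u x = mul x u) :
    u = re u • one := by
  obtain ⟨a, b⟩ := u
  have ha : a = star a := by simpa [mul] using congrArg Prod.snd (hu (0, 1))
  have hb : b = 0 := by
    let i : Quaternion ℝ := ⟨0, 1, 0, 0⟩
    have hi : star i = -i := Quaternion.star_eq_neg.mpr rfl
    have hbi : b * -i = b * i := by simpa [mul, hi] using congrArg Prod.snd (hu (i, 0))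
    by_contra hb_ne
    have hi_neg : -i = i := mul_left_cancel₀ hb_ne hbi
    have hneg : (-1 : ℝ) = 1 := congrArg QuaternionAlgebra.imI hi_neg
    norm_num at hneg
  ext : 1
  · simpa [one, re, ← Quaternion.coe_mul_eq_smul] using Quaternion.star_eq_self.mp ha.symm
  · simp [one, hb]

end Algebra

section Automorphism

theorem map_one_of_map_mul {f : Oct → Oct} (hf : Function.Surjective f)
    (hmul : ∀ x y, f (mul x y) = mul (f x) (f y)) : f one = one := by
  obtain ⟨e, he⟩ := hf one
  calc
    f one = mul (f one) (f e) := by rw [he, Oct.mul_one]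
    _ = f e := by rw [← hmul, Oct.one_mul]
    _ = one := he

variable {A : Oct ≃ₗ[ℝ] Oct}

theorem re_map_of_map_mul (hmul : ∀ x y, A (mul x y) = mul (A x) (A y)) (x : Oct) :
    re (A x) = re x := by
  have hone : A one = one := map_one_of_map_mul A.surjective hmul
  have hsq : (2 * re x) • A x - normSq x • one = (2 * re (A x)) • A x - normSq (A x) • one := by
    rw [← mul_self_eq_two_re_smul_sub_normSq_smul_one (A x), ← hmul,
      mul_self_eq_two_re_smul_sub_normSq_smul_one x, map_sub, map_smul, map_smul, hone]
  by_contra hne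
  have hcoeff : 2 * re x - 2 * re (A x) ≠ 0 := by grind
  obtain ⟨r, hr⟩ : ∃ r : ℝ, A x = r • one := by
    refine ⟨(2 * re x - 2 * re (A x))⁻¹ * (normSq x - normSq (A x)), ?_⟩
    rw [mul_smul, eq_inv_smul_iff₀ hcoeff, sub_smul, sub_smul]
    grind
  have hx : x = r • one := A.injective (by rw [hr, map_smul, hone])
  exact hne (by rw [hr, hx])

theorem map_conj_of_map_mul (hmul : ∀ x y, A (mul x y) = mul (A x) (A y)) (x : Oct) :
    A (conj x) = conj (A x) := by
  rw [conj_eq_two_re_smul_one_sub, conj_eq_two_re_smul_one_sub, map_sub, map_smul,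
    map_one_of_map_mul A.surjective hmul, re_map_of_map_mul hmul]

theorem conjOp_eq_self_of_map_mul (hmul : ∀ x y, A (mul x y) = mul (A x) (A y)) :
    conjOp A = A := by
  ext1 x
  calc
    conj (A (conj x)) = conj (conj (A x)) := by rw [map_conj_of_map_mul hmul]
    _ = A x := conj_conj (A x)

end Automorphism

section TauMap

variable {A B C : Oct ≃ₗ[ℝ] Oct}

theorem tauMap_eq_self_iff :
    tauMap (A, B, C) = (A, B, C) ↔ conjOp B = A ∧ conjOp C = B ∧ A = C := by
  simp only [tauMap, Prod.mk.injEq]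

theorem exists_eq_smul_of_forall_map_mul_eq {f g : Oct → Oct} (hf : Function.Surjective f)
    (hmul : ∀ x y, g (mul x y) = mul (f x) (f y)) :
    ∃ r : ℝ, f one = r • one ∧ ∀ x, g x = r • f x := by
  have hleft (x : Oct) : g x = mul (f one) (f x) := by rw [← hmul, Oct.one_mul]
  have hright (x : Oct) : g x = mul (f x) (f one) := by rw [← hmul, Oct.mul_one]
  have hcentral : f one = re (f one) • one :=
    eq_re_smul_one_of_forall_mul_comm <| hf.forall.mpr fun x => (hleft x).symm.trans (hright x)
  refine ⟨re (f one), hcentral, fun x => ?_⟩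
  rw [hleft, hcentral, smul_one_mul, re_smul_one]

theorem eq_of_conjOp_eq_of_forall_map_mul_eq (hconj : conjOp A = B)
    (hmul : ∀ x y, B (mul x y) = mul (A x) (A y)) : B = A := by
  obtain ⟨r, hA_one, hB⟩ := exists_eq_smul_of_forall_map_mul_eq A.surjective hmul
  have hB_one : B one = A one := calc
    B one = conj (A (conj one)) := by rw [← hconj]; rfl
    _ = A one := by rw [conj_one, hA_one, conj_smul, conj_one]
  have hA_one_ne : A one ≠ 0 := A.map_ne_zero_iff.mpr Oct.one_ne_zero
  have hr : r = 1 := smul_left_injective ℝ hA_one_ne (by simp only [one_smul, ← hB, hB_one])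
  ext1 x
  rw [hB, hr, one_smul]

end TauMap

end Oct

theorem tau_fixed_iff_automorphism_general (A B C : Oct ≃ₗ[ℝ] Oct)
    (hmul : ∀ x y : Oct, B (mul x y) = mul (C x) (A y)) :
    (tauMap (A, B, C) = (A, B, C) ↔ (B = A ∧ C = A))
    ∧ ((B = A ∧ C = A) ↔
        ((∀ x y : Oct, A (mul x y) = mul (A x) (A y)) ∧ B = A ∧ C = A)) := by
  refine ⟨⟨fun hfixed => ?_, ?_⟩, ⟨?_, And.right⟩⟩
  · obtain ⟨-, hconj, rfl⟩ := tauMap_eq_self_iff.mp hfixed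
    exact ⟨eq_of_conjOp_eq_of_forall_map_mul_eq hconj hmul, rfl⟩
  · rintro ⟨rfl, rfl⟩
    have hconj := conjOp_eq_self_of_map_mul hmul
    exact tauMap_eq_self_iff.mpr ⟨hconj, hconj, rfl⟩
  · rintro ⟨rfl, rfl⟩
    exact ⟨hmul, rfl, rfl⟩

/-- a triality triple (A,B,C) is fixed by τ iff A = B = C, iff A is an
algebra automorphism of 𝕆 (and B = C = A). -/
theorem tau_fixed_iff_automorphism (A B C : Oct ≃ₗ[ℝ] Oct)
    (h : IsTriality A B C) :
    (tauMap (A, B, C) = (A, B, C) ↔ (B = A ∧ C = A))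
    ∧ ((B = A ∧ C = A) ↔
        ((∀ x y : Oct, A (mul x y) = mul (A x) (A y)) ∧ B = A ∧ C = A)) :=
  tau_fixed_iff_automorphism_general A B C h.2.2.2
end
end
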